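/- Let 1/2 ≤ α < 1. If f is analytic on 𝔻 with f(0) = 0, f'(0) = 1, f(z) ≠ 0 on 𝔻 \ {0}, and z f'(z)/f(z) ∈ {α + (1 − α)√(1 + w) : w ∈ 𝔻} for every z ∈ 𝔻 \ {0}, where √ denotes the principal square root (i.e. f ∈ S*_L(α)), then f ∈ S*_car. -/

import Mathlib

open Complex Metric

def omegaCar : Set ℂ := {w : ℂ | ∃ u : ℂ, ‖u‖ < 1 ∧ w = 1 + u + u ^ 2 / 2}

def SCar (f : ℂ → ℂ) : Prop :=
  DifferentiableOn ℂ f (Metric.ball (0 : ℂ) 1) ∧ f 0 = 0 ∧ deriv f 0 = 1 ∧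
    (∀ z : ℂ, ‖z‖ < 1 → z ≠ 0 → f z ≠ 0) ∧
    (∀ z : ℂ, ‖z‖ < 1 → z ≠ 0 → z * deriv f z / f z ∈ omegaCar)

/-!
Completing the square, `2 * (1 + u + u ^ 2 / 2) - 1 = (1 + u) ^ 2`, so `ω ↦ 2 * ω - 1` maps
`omegaCar` onto the set of squares of points of the disc `‖v - 1‖ < 1`. This is the interior of the
cardioid `‖q‖ ^ 2 = 2 * (‖q‖ + q.re)`, and it contains the half-disc `0 < q.re`, `‖q‖ < 2`. With
`s = √(1 + w)` the point `2 * (α + (1 - α) * s) - 1 = (2 * α - 1) * 1 + 2 * (1 - α) * s` is a convex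
combination of two points of that half-disc exactly because `1 / 2 ≤ α ≤ 1`.
-/

/-- The open right half of the disc of radius `r` about the origin. For `r = 2` it is a convex
subset of the image of `omegaCar` under `ω ↦ 2 * ω - 1`. -/
def rightHalfDisc (r : ℝ) : Set ℂ := {z : ℂ | 0 < z.re} ∩ ball 0 r

lemma mem_rightHalfDisc {r : ℝ} {z : ℂ} : z ∈ rightHalfDisc r ↔ 0 < z.re ∧ ‖z‖ < r :=
  Iff.rfl.and mem_ball_zero_iff

lemma convex_rightHalfDisc (r : ℝ) : Convex ℝ (rightHalfDisc r) :=
  (convex_halfSpace_re_gt 0).inter (convex_ball 0 r)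

lemma cpow_inv_two_re_pos {z : ℂ} (hz : z ∈ slitPlane) : 0 < (z ^ (2⁻¹ : ℂ)).re := by
  have norm_add_re_pos : 0 < ‖z‖ + z.re := by
    rcases mem_slitPlane_iff.mp hz with hre | him
    · positivity
    · linarith [neg_abs_le z.re, abs_re_lt_norm.mpr him]
  rw [cpow_inv_two_re]
  positivity

lemma cpow_inv_two_mem_rightHalfDisc {r : ℝ} {z : ℂ} (hr : 0 ≤ r) (hz : z ∈ slitPlane)
    (hzr : ‖z‖ < r ^ 2) : z ^ (2⁻¹ : ℂ) ∈ rightHalfDisc r := by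
  refine mem_rightHalfDisc.mpr ⟨cpow_inv_two_re_pos hz, lt_of_pow_lt_pow_left₀ 2 hr ?_⟩
  rwa [← norm_pow, cpow_ofNat_inv_pow]

lemma norm_sub_one_lt_one_iff {v : ℂ} : ‖v - 1‖ < 1 ↔ ‖v‖ ^ 2 < 2 * v.re := by
  have norm_sub_one_sq : ‖v - 1‖ ^ 2 = ‖v‖ ^ 2 - 2 * v.re + 1 := by
    simp only [Complex.sq_norm, normSq_sub, map_one, mul_one]
    ring
  rw [← sq_lt_one_iff₀ (norm_nonneg _), norm_sub_one_sq, add_lt_iff_neg_right, sub_neg]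

lemma norm_sq_add_re_sq (v : ℂ) : ‖v ^ 2‖ + (v ^ 2).re = 2 * v.re ^ 2 := by
  rw [norm_pow, Complex.sq_norm, normSq_apply, pow_two v, mul_re]
  ring

lemma norm_sub_one_lt_one_iff_sq {v : ℂ} (hv : 0 ≤ v.re) :
    ‖v - 1‖ < 1 ↔ ‖v ^ 2‖ ^ 2 < 2 * (‖v ^ 2‖ + (v ^ 2).re) := by
  calc ‖v - 1‖ < 1 ↔ ‖v ^ 2‖ < 2 * v.re := by rw [norm_sub_one_lt_one_iff, norm_pow]
    _ ↔ ‖v ^ 2‖ ^ 2 < (2 * v.re) ^ 2 := (sq_lt_sq₀ (norm_nonneg _) (by positivity)).symm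
    _ ↔ ‖v ^ 2‖ ^ 2 < 2 * (‖v ^ 2‖ + (v ^ 2).re) := by rw [norm_sq_add_re_sq]; ring_nf

lemma mem_omegaCar_iff {ω : ℂ} :
    ω ∈ omegaCar ↔ ‖2 * ω - 1‖ ^ 2 < 2 * (‖2 * ω - 1‖ + (2 * ω - 1).re) := by
  constructor
  · rintro ⟨u, hu, rfl⟩
    have re_nonneg : 0 ≤ (1 + u).re := by
      rw [add_re, one_re]
      linarith [neg_le_of_abs_le (abs_re_le_norm u)]
    have two_mul_sub_one : 2 * (1 + u + u ^ 2 / 2) - 1 = (1 + u) ^ 2 := by ring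
    rwa [two_mul_sub_one, ← norm_sub_one_lt_one_iff_sq re_nonneg, add_sub_cancel_left]
  · intro hω
    obtain ⟨v, hv, hvω⟩ : ∃ v : ℂ, 0 ≤ v.re ∧ v ^ 2 = 2 * ω - 1 :=
      ⟨(2 * ω - 1) ^ (2⁻¹ : ℂ), by rw [cpow_inv_two_re]; positivity, cpow_ofNat_inv_pow _ 2⟩
    rw [← hvω, ← norm_sub_one_lt_one_iff_sq hv] at hω
    exact ⟨v - 1, hω, by linear_combination -hvω / 2⟩

lemma mem_omegaCar_of_mem_rightHalfDisc {ω : ℂ} (hω : 2 * ω - 1 ∈ rightHalfDisc 2) :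
    ω ∈ omegaCar := by
  obtain ⟨re_pos, norm_lt_two⟩ := mem_rightHalfDisc.mp hω
  rw [mem_omegaCar_iff]
  calc ‖2 * ω - 1‖ ^ 2 ≤ 2 * ‖2 * ω - 1‖ := by rw [sq]; gcongr
    _ < 2 * (‖2 * ω - 1‖ + (2 * ω - 1).re) := by linarith

lemma add_mul_mem_omegaCar {α : ℝ} {s : ℂ} (hα : 1 / 2 ≤ α) (hα' : α ≤ 1)
    (hs : s ∈ rightHalfDisc 2) : (α : ℂ) + (1 - α) * s ∈ omegaCar := by
  have one_mem : (1 : ℂ) ∈ rightHalfDisc 2 := by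
    simp [mem_rightHalfDisc]
  have mem_segment : (2 * α - 1) • (1 : ℂ) + (2 * (1 - α)) • s ∈ rightHalfDisc 2 :=
    convex_rightHalfDisc 2 one_mem hs (by linarith) (by linarith) (by ring)
  refine mem_omegaCar_of_mem_rightHalfDisc ?_
  convert mem_segment using 1
  simp only [real_smul]
  push_cast
  ring

theorem stmt_8 (α : ℝ) (hα0 : 1 / 2 ≤ α) (hα1 : α < 1)
    (f : ℂ → ℂ)
    (hfd : DifferentiableOn ℂ f (Metric.ball (0 : ℂ) 1))
    (hf0 : f 0 = 0) (hf1 : deriv f 0 = 1)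
    (hfne : ∀ z : ℂ, ‖z‖ < 1 → z ≠ 0 → f z ≠ 0)
    (hsub : ∀ z : ℂ, ‖z‖ < 1 → z ≠ 0 → ∃ w : ℂ, ‖w‖ < 1 ∧
      z * deriv f z / f z = (α : ℂ) + (1 - (α : ℂ)) * (1 + w) ^ ((1 : ℂ) / 2)) :
    SCar f := by
  refine ⟨hfd, hf0, hf1, hfne, fun z hz hz0 ↦ ?_⟩
  obtain ⟨w, hw, ratio_eq⟩ := hsub z hz hz0
  have norm_one_add_lt : ‖1 + w‖ < 2 ^ 2 := by
    linarith [norm_add_le 1 w, norm_one (α := ℂ)]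
  rw [ratio_eq, one_div]
  exact add_mul_mem_omegaCar hα0 hα1.le <|
    cpow_inv_two_mem_rightHalfDisc zero_le_two (mem_slitPlane_of_norm_lt_one hw) norm_one_add_lt
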